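/- The Dirichlet Laplacian on the rounded broken guide Γ^♯ has a bound state below π²: there exists a nonzero ψ ∈ H¹₀(Γ^♯) such that ∫_{Γ^♯}|∇ψ|²dx < π² ∫_{Γ^♯}|ψ|²dx; consequently λ₁(Γ^♯) := inf{∫_{Γ^♯}|∇u|²dx / ∫_{Γ^♯}|u|²dx : 0≠u∈H¹₀(Γ^♯)} < π². -/

import Mathlib

/-!
Let `d` be the distance to the closed quadrant. On `Γ♯` the function `sin (π d)` is `C¹`: the guide is
made of two half-strips of width one and a quarter disc of radius one, and `d` is the transversal
coordinate on the strips and the radius on the disc. Its energy `∫ |∇ψ|² - π² ∫ ψ²` vanishes on the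
disc, because `∫₀¹ r cos (2πr) dr = 0`, and vanishes on each cross-section of the strips. It is not a
critical point of the energy, however: perturbing it by `ε B(d)` near the corner, with `B ≥ 0` a bump
supported in `(0, 1/2)`, changes the energy on the disc to first order by `-ε π² ∫₀¹ cos (πr) B(r) dr`,
which is negative for `ε > 0`, while the first-order change on the strips is zero
(`integral_disc_cross`, `integral_strip_cross`).

The trial function is `A(d) P + ε B(d) η`. Here `P` is a cutoff along the strips at scale `L`,
costing `O(1/L)`, and `η` is a cutoff of scale one; choosing `P = 1` where `η` varies removes the
term in `P′ η′`. The profile `A` is a compactly supported approximation `sinApprox n` of `sin (π ·)`.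
`energy_formula` reduces the energy to one-dimensional integrals (polar coordinates on the disc,
Fubini on the strips). `tendsto_integral_sinApprox` lets `n → ∞` by dominated convergence, the limit
is `-ε a + ε² b + K / L` with `a > 0` (`integral_limit`), and `exists_parameters` makes it negative by
taking `ε` small and then `L` large.
-/

noncomputable section
open MeasureTheory Set Real

/-- The open first quadrant `(ℝ₊)²` in the Euclidean plane. -/
def Quad : Set (EuclideanSpace ℝ (Fin 2)) := {x | 0 < x 0 ∧ 0 < x 1}

/-- The broken guide with rounded outer corner
`Γ♯ = {x ∈ ℝ² ∖ closure((ℝ₊)²) : dist(x, ∂(ℝ₊)²) < 1}`. -/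
def GamSharp : Set (EuclideanSpace ℝ (Fin 2)) :=
  {x | x ∉ closure Quad ∧ Metric.infDist x (frontier Quad) < 1}

/-- First Rayleigh quotient `λ₁(Γ♯)` of the Dirichlet Laplacian on `Γ♯`
(infimum over the dense class of `C¹` compactly supported functions in `Γ♯`;
note that on Euclidean space `‖fderiv ℝ u x‖² = |∇u(x)|²`). -/
def lamGamSharp : ℝ :=
  sInf {r | ∃ u : EuclideanSpace ℝ (Fin 2) → ℝ, ContDiff ℝ 1 u ∧ HasCompactSupport u ∧
    tsupport u ⊆ GamSharp ∧ (∫ x in GamSharp, (u x) ^ 2) ≠ 0 ∧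
    r = (∫ x in GamSharp, ‖fderiv ℝ u x‖ ^ 2) / ∫ x in GamSharp, (u x) ^ 2}

/-! ### Distance to the quadrant -/

/-- The Euclidean plane. -/
abbrev E2 := EuclideanSpace ℝ (Fin 2)

/-- The squared distance from `x` to the closed first quadrant. -/
def sqDist (x : E2) : ℝ := (min (x 0) 0) ^ 2 + (min (x 1) 0) ^ 2

lemma sqDist_nonneg (x : E2) : 0 ≤ sqDist x := by unfold sqDist; positivity

lemma hasDerivAt_min_sq (t : ℝ) :
    HasDerivAt (fun t : ℝ => (min t 0) ^ 2) (2 * min t 0) t := by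
  rcases lt_trichotomy t 0 with h | h | h
  · have h1 : HasDerivAt (fun t : ℝ => t ^ 2) (2 * t) t := by
      simpa using hasDerivAt_pow 2 t
    rw [min_eq_left h.le]
    refine h1.congr_of_eventuallyEq ?_
    filter_upwards [Iio_mem_nhds h] with s hs
    rw [min_eq_left (le_of_lt hs)]
  · subst h
    rw [hasDerivAt_iff_isLittleO]
    simp only [min_self, sub_zero, mul_zero, smul_zero]
    have h2 : (fun t : ℝ => t ^ 2) =o[nhds 0] fun t : ℝ => t := by
      simpa using Asymptotics.isLittleO_pow_pow (𝕜 := ℝ) (m := 1) (n := 2) (by norm_num)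
    refine Asymptotics.IsBigO.trans_isLittleO ?_ h2
    refine Asymptotics.IsBigO.of_bound 1 (Filter.Eventually.of_forall fun s => ?_)
    rw [one_mul, Real.norm_eq_abs, Real.norm_eq_abs]
    rcases min_choice s 0 with h | h <;> rw [h] <;> simp
    positivity
  · rw [min_eq_right h.le, mul_zero]
    refine (hasDerivAt_const t (0 : ℝ)).congr_of_eventuallyEq ?_
    filter_upwards [Ioi_mem_nhds h] with s hs
    rw [min_eq_right (le_of_lt hs)]; norm_num

lemma contDiff_min_sq : ContDiff ℝ 1 (fun t : ℝ => (min t 0) ^ 2) := by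
  rw [contDiff_one_iff_deriv]
  refine ⟨fun t => (hasDerivAt_min_sq t).differentiableAt, ?_⟩
  have : deriv (fun t : ℝ => (min t 0) ^ 2) = fun t => 2 * min t 0 :=
    funext fun t => (hasDerivAt_min_sq t).deriv
  rw [this]; fun_prop

lemma contDiff_coord (i : Fin 2) : ContDiff ℝ 1 (fun x : E2 => x i) :=
  (EuclideanSpace.proj (𝕜 := ℝ) i).contDiff

lemma contDiff_sqDist : ContDiff ℝ 1 sqDist :=
  (contDiff_min_sq.comp (contDiff_coord 0)).add (contDiff_min_sq.comp (contDiff_coord 1))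

lemma isOpen_Quad : IsOpen Quad :=
  (isOpen_lt continuous_const (contDiff_coord 0).continuous).inter
    (isOpen_lt continuous_const (contDiff_coord 1).continuous)

lemma mem_GamSharp_of_sqDist {x : E2} (h0 : 0 < sqDist x) (h1 : sqDist x < 1) :
    x ∈ GamSharp := by
  have hneg : x 0 < 0 ∨ x 1 < 0 := by
    by_contra! h
    simp [sqDist, min_eq_right h.1, min_eq_right h.2] at h0
  constructor
  · intro hx
    have hc : IsClosed {x : E2 | 0 ≤ x 0 ∧ 0 ≤ x 1} :=
      (isClosed_le continuous_const (contDiff_coord 0).continuous).inter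
        (isClosed_le continuous_const (contDiff_coord 1).continuous)
    have hsub : Quad ⊆ {x : E2 | 0 ≤ x 0 ∧ 0 ≤ x 1} := by
      intro y hy
      exact And.intro (le_of_lt hy.1) (le_of_lt hy.2)
    have : x ∈ {x : E2 | 0 ≤ x 0 ∧ 0 ≤ x 1} := closure_minimal hsub hc hx
    rcases hneg with h | h
    · exact absurd this.1 (not_le.2 h)
    · exact absurd this.2 (not_le.2 h)
  · -- the nearest point of the closed quadrant lies on its boundary
    set p : E2 := !₂[max (x 0) 0, max (x 1) 0] with hp
    have hpf : p ∈ frontier Quad := by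
      rw [isOpen_Quad.frontier_eq]
      constructor
      · have hcont : Continuous (fun t : ℝ => (!₂[max (x 0) 0 + t, max (x 1) 0 + t] : E2)) := by
          fun_prop
        have ht : Filter.Tendsto (fun t : ℝ => (!₂[max (x 0) 0 + t, max (x 1) 0 + t] : E2))
            (nhdsWithin 0 (Ioi 0)) (nhds p) := by
          have := (hcont.tendsto 0).mono_left (nhdsWithin_le_nhds (s := Ioi (0 : ℝ)))
          simpa [hp] using this
        refine mem_closure_of_tendsto ht ?_
        filter_upwards [self_mem_nhdsWithin] with t ht
        have ht : 0 < t := ht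
        constructor
        · simpa using add_pos_of_nonneg_of_pos (le_max_right (x 0) 0) ht
        · simpa using add_pos_of_nonneg_of_pos (le_max_right (x 1) 0) ht
      · rintro ⟨ha, hb⟩
        simp [hp] at ha hb
        rcases hneg with h | h <;> linarith
    refine lt_of_le_of_lt (Metric.infDist_le_dist_of_mem hpf) ?_
    have hd : dist x p = √(sqDist x) := by
      rw [EuclideanSpace.dist_eq, Fin.sum_univ_two]
      congr 1
      have aux : ∀ t : ℝ, dist t (max t 0) ^ 2 = (min t 0) ^ 2 := by
        intro t
        rw [Real.dist_eq, sq_abs]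
        rcases le_total t 0 with h | h
        · rw [max_eq_right h, min_eq_left h, sub_zero]
        · rw [max_eq_left h, min_eq_right h, sub_self]
      simp [hp, sqDist, aux]
    rw [hd]
    rw [Real.sqrt_lt' one_pos]; simpa using h1

/-! ### Trial functions -/

/-- `f` is a `C¹` function of the distance, supported in `[c, 1 - c]`. -/
structure IsProfile (f : ℝ → ℝ) (c : ℝ) : Prop where
  smooth : ContDiff ℝ 1 f
  pos : 0 < c
  zero_left : ∀ r, r < c → f r = 0
  zero_right : ∀ r, 1 - c < r → f r = 0

/-- `k` is a `C¹` longitudinal cutoff: `1` on the negative half-line and `0` beyond `R`. -/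
structure IsCutoff (k : ℝ → ℝ) (R : ℝ) : Prop where
  smooth : ContDiff ℝ 1 k
  one : ∀ t, t ≤ 0 → k t = 1
  zero : ∀ t, R ≤ t → k t = 0

/-- The function `f(d) k(x₀) k(x₁)`, with `d` the distance to the quadrant. On the support of `f(d)` at
most one coordinate is positive, so at most one factor `k` differs from `1`. -/
def piece (f k : ℝ → ℝ) (x : E2) : ℝ := f (√(sqDist x)) * (k (x 0) * k (x 1))

/-- Vanishing of `f` near `0` removes the singularity of the square root at the quadrant. -/
lemma contDiff_piece {f k : ℝ → ℝ} {c R : ℝ} (hf : IsProfile f c) (hk : IsCutoff k R) :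
    ContDiff ℝ 1 (piece f k) := by
  refine ContDiff.mul ?_ ((hk.smooth.comp (contDiff_coord 0)).mul
    (hk.smooth.comp (contDiff_coord 1)))
  rw [contDiff_iff_contDiffAt]
  intro x
  by_cases hx : sqDist x = 0
  · have : ∀ᶠ y in nhds x, √(sqDist y) < c := by
      have hc : Continuous fun y => √(sqDist y) := contDiff_sqDist.continuous.sqrt
      apply hc.continuousAt.eventually_lt continuousAt_const
      simpa [hx] using hf.pos
    refine (contDiffAt_const (c := (0 : ℝ))).congr_of_eventuallyEq ?_
    filter_upwards [this] with y hy using hf.zero_left _ hy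
  · exact hf.smooth.contDiffAt.comp x ((contDiff_sqDist.contDiffAt).sqrt hx)

lemma piece_support {f k : ℝ → ℝ} {c R : ℝ} (hf : IsProfile f c) (hk : IsCutoff k R) {x : E2}
    (hx : piece f k x ≠ 0) : √(sqDist x) ∈ Icc c (1 - c) ∧ x 0 ≤ R ∧ x 1 ≤ R := by
  refine ⟨⟨?_, ?_⟩, ?_, ?_⟩ <;> by_contra! h <;> apply hx
  · simp [piece, hf.zero_left _ h]
  · simp [piece, hf.zero_right _ h]
  · simp [piece, hk.zero _ h.le]
  · simp [piece, hk.zero _ h.le]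

/-- The sum of two pieces; used with a long-range and a short-range cutoff. -/
def trial (f₁ k₁ f₂ k₂ : ℝ → ℝ) (x : E2) : ℝ := piece f₁ k₁ x + piece f₂ k₂ x

lemma trial_support {f₁ k₁ f₂ k₂ : ℝ → ℝ} {c R : ℝ} (hf₁ : IsProfile f₁ c)
    (hk₁ : IsCutoff k₁ R) (hf₂ : IsProfile f₂ c) (hk₂ : IsCutoff k₂ R) :
    tsupport (trial f₁ k₁ f₂ k₂) ⊆ {x | √(sqDist x) ∈ Icc c (1 - c) ∧ x 0 ≤ R ∧ x 1 ≤ R} := by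
  refine closure_minimal ?_ ?_
  · intro x hx
    by_cases h : piece f₁ k₁ x = 0
    · exact piece_support hf₂ hk₂ fun h' => hx (by simp [trial, h, h'])
    · exact piece_support hf₁ hk₁ h
  · have hc : Continuous fun y => √(sqDist y) := contDiff_sqDist.continuous.sqrt
    exact (isClosed_Icc.preimage hc).inter
      ((isClosed_le (contDiff_coord 0).continuous continuous_const).inter
        (isClosed_le (contDiff_coord 1).continuous continuous_const))

lemma mem_GamSharp_of_Icc {c : ℝ} (hc : 0 < c) {x : E2} (hx : √(sqDist x) ∈ Icc c (1 - c)) :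
    x ∈ GamSharp := by
  apply mem_GamSharp_of_sqDist
  · exact Real.sqrt_pos.1 (hc.trans_le hx.1)
  · have : √(sqDist x) < 1 := by linarith [hx.2]
    rw [Real.sqrt_lt' one_pos] at this; simpa using this

lemma coord_gt {c : ℝ} (hc : 0 < c) {x : E2} (hx : √(sqDist x) ∈ Icc c (1 - c)) (i : Fin 2) :
    -1 < x i := by
  have : √(sqDist x) < 1 := by linarith [hx.2]
  rw [Real.sqrt_lt' one_pos] at this
  unfold sqDist at this
  by_contra! h
  fin_cases i
  · simp at h
    rw [min_eq_left (a := x 0) (by linarith)] at this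
    nlinarith [sq_nonneg (min (x 1) 0)]
  · simp at h
    rw [min_eq_left (a := x 1) (by linarith)] at this
    nlinarith [sq_nonneg (min (x 0) 0)]

lemma hasCompactSupport_trial {f₁ k₁ f₂ k₂ : ℝ → ℝ} {c R : ℝ} (hf₁ : IsProfile f₁ c)
    (hk₁ : IsCutoff k₁ R) (hf₂ : IsProfile f₂ c) (hk₂ : IsCutoff k₂ R) :
    HasCompactSupport (trial f₁ k₁ f₂ k₂) := by
  have hb : IsCompact ((EuclideanSpace.equiv (Fin 2) ℝ) ⁻¹' (Icc (fun _ => -1) (fun _ => R))) :=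
    (EuclideanSpace.equiv (Fin 2) ℝ).toHomeomorph.isClosedEmbedding.isCompact_preimage isCompact_Icc
  refine hb.of_isClosed_subset (isClosed_tsupport _) ?_
  intro x hx
  have h := trial_support hf₁ hk₁ hf₂ hk₂ hx
  refine ⟨fun i => (coord_gt hf₁.pos h.1 i).le, fun i => ?_⟩
  fin_cases i
  · exact h.2.1
  · exact h.2.2

/-! ### Energy density on the quadrants -/

lemma norm_sq_of_hasFDerivAt {ψ : E2 → ℝ} {x : E2} {u v : ℝ}
    (h : HasFDerivAt ψ (u • (EuclideanSpace.proj 0 : E2 →L[ℝ] ℝ) +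
      v • (EuclideanSpace.proj 1 : E2 →L[ℝ] ℝ)) x) :
    ‖fderiv ℝ ψ x‖ ^ 2 = u ^ 2 + v ^ 2 := by
  have : (u • (EuclideanSpace.proj 0 : E2 →L[ℝ] ℝ) + v • (EuclideanSpace.proj 1 : E2 →L[ℝ] ℝ))
      = innerSL ℝ (!₂[u, v] : E2) := by
    ext y
    simp [PiLp.inner_apply, Fin.sum_univ_two]
    ring
  rw [h.fderiv, this, innerSL_apply_norm, EuclideanSpace.norm_sq_eq, Fin.sum_univ_two]
  simp

lemma hasFDerivAt_coord (i : Fin 2) (x : E2) :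
    HasFDerivAt (fun y : E2 => y i) (EuclideanSpace.proj i : E2 →L[ℝ] ℝ) x :=
  (EuclideanSpace.proj (𝕜 := ℝ) i : E2 →L[ℝ] ℝ).hasFDerivAt

lemma IsProfile.hasDerivAt {f : ℝ → ℝ} {c : ℝ} (hf : IsProfile f c) (r : ℝ) :
    HasDerivAt f (deriv f r) r :=
  ((hf.smooth.differentiable one_ne_zero) r).hasDerivAt

lemma IsCutoff.hasDerivAt {f : ℝ → ℝ} {c : ℝ} (hf : IsCutoff f c) (r : ℝ) :
    HasDerivAt f (deriv f r) r :=
  ((hf.smooth.differentiable one_ne_zero) r).hasDerivAt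

lemma isOpen_quadrant (σ τ : ℝ) : IsOpen {y : E2 | 0 < σ * y 0 ∧ 0 < τ * y 1} :=
  (isOpen_lt continuous_const (continuous_const.mul (contDiff_coord 0).continuous)).inter
    (isOpen_lt continuous_const (continuous_const.mul (contDiff_coord 1).continuous))

lemma piece_pos_pos {f k : ℝ → ℝ} {c : ℝ} (hf : IsProfile f c) {y : E2}
    (h0 : 0 ≤ y 0) (h1 : 0 ≤ y 1) : piece f k y = 0 := by
  simp [piece, sqDist, min_eq_right h0, min_eq_right h1, hf.zero_left 0 hf.pos]

lemma piece_pos_neg {f k : ℝ → ℝ} {R : ℝ} (hk : IsCutoff k R) {y : E2}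
    (h0 : 0 ≤ y 0) (h1 : y 1 ≤ 0) : piece f k y = f (-y 1) * k (y 0) := by
  simp [piece, sqDist, min_eq_right h0, min_eq_left h1, hk.one _ h1, Real.sqrt_sq_eq_abs,
    abs_of_nonpos h1]

lemma piece_neg_pos {f k : ℝ → ℝ} {R : ℝ} (hk : IsCutoff k R) {y : E2}
    (h0 : y 0 ≤ 0) (h1 : 0 ≤ y 1) : piece f k y = f (-y 0) * k (y 1) := by
  simp [piece, sqDist, min_eq_left h0, min_eq_right h1, hk.one _ h0, Real.sqrt_sq_eq_abs,
    abs_of_nonpos h0]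

lemma piece_neg_neg {f k : ℝ → ℝ} {R : ℝ} (hk : IsCutoff k R) {y : E2}
    (h0 : y 0 ≤ 0) (h1 : y 1 ≤ 0) : piece f k y = f (√(y 0 ^ 2 + y 1 ^ 2)) := by
  simp [piece, sqDist, min_eq_left h0, min_eq_left h1, hk.one _ h0, hk.one _ h1]

/-- The integrand `|∇ψ|² - π² ψ²`. -/
def energyDensity (ψ : E2 → ℝ) (x : E2) : ℝ := ‖fderiv ℝ ψ x‖ ^ 2 - π ^ 2 * ψ x ^ 2

/-- Energy density of the trial function on a half-strip, `t` being the longitudinal and `r` the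
transversal coordinate. -/
def stripDensity (f₁ k₁ f₂ k₂ : ℝ → ℝ) (t r : ℝ) : ℝ :=
  (deriv f₁ r * k₁ t + deriv f₂ r * k₂ t) ^ 2 + (f₁ r * deriv k₁ t + f₂ r * deriv k₂ t) ^ 2
    - π ^ 2 * (f₁ r * k₁ t + f₂ r * k₂ t) ^ 2

/-- Energy density of the trial function on the quarter disc at radius `r`; both cutoffs are `1` there. -/
def discDensity (f₁ f₂ : ℝ → ℝ) (r : ℝ) : ℝ :=
  (deriv f₁ r + deriv f₂ r) ^ 2 - π ^ 2 * (f₁ r + f₂ r) ^ 2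

lemma density_pos_pos {f₁ k₁ f₂ k₂ : ℝ → ℝ} {c : ℝ} (hf₁ : IsProfile f₁ c)
    (hf₂ : IsProfile f₂ c) {x : E2} (h0 : 0 < x 0) (h1 : 0 < x 1) :
    energyDensity (trial f₁ k₁ f₂ k₂) x = 0 := by
  have hev : trial f₁ k₁ f₂ k₂ =ᶠ[nhds x] fun _ => 0 := by
    filter_upwards [(isOpen_quadrant 1 1).mem_nhds (x := x) (by simp [h0, h1])] with y hy
    simp only [one_mul] at hy
    rw [trial, piece_pos_pos hf₁ hy.1.le hy.2.le,
      piece_pos_pos hf₂ hy.1.le hy.2.le, add_zero]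
  rw [energyDensity, hev.fderiv_eq, hev.eq_of_nhds]
  simp

lemma density_pos_neg {f₁ k₁ f₂ k₂ : ℝ → ℝ} {c R : ℝ} (hf₁ : IsProfile f₁ c)
    (hk₁ : IsCutoff k₁ R) (hf₂ : IsProfile f₂ c) (hk₂ : IsCutoff k₂ R) {x : E2} (h0 : 0 < x 0) (h1 : x 1 < 0) :
    energyDensity (trial f₁ k₁ f₂ k₂) x = stripDensity f₁ k₁ f₂ k₂ (x 0) (-x 1) := by
  have hev : trial f₁ k₁ f₂ k₂ =ᶠ[nhds x]
      fun y => f₁ (-y 1) * k₁ (y 0) + f₂ (-y 1) * k₂ (y 0) := by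
    filter_upwards [(isOpen_quadrant 1 (-1)).mem_nhds (x := x) (by simp [h0, h1])] with y hy
    simp only [one_mul] at hy
    rw [trial, piece_pos_neg hk₁ hy.1.le (by linarith [hy.2]),
      piece_pos_neg hk₂ hy.1.le (by linarith [hy.2])]
  have key : ∀ {f k : ℝ → ℝ}, IsProfile f c → IsCutoff k R →
      HasFDerivAt (fun y : E2 => f (-y 1) * k (y 0)) _ x := fun {f k} hf hk =>
    ((hf.hasDerivAt (-x 1)).comp_hasFDerivAt x (hasFDerivAt_coord 1 x).fun_neg).mul
      ((hk.hasDerivAt (x 0)).comp_hasFDerivAt x (hasFDerivAt_coord 0 x))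
  have hd : HasFDerivAt (trial f₁ k₁ f₂ k₂)
      ((f₁ (-x 1) * deriv k₁ (x 0) + f₂ (-x 1) * deriv k₂ (x 0)) •
        (EuclideanSpace.proj 0 : E2 →L[ℝ] ℝ) +
      (-(deriv f₁ (-x 1) * k₁ (x 0) + deriv f₂ (-x 1) * k₂ (x 0))) •
        (EuclideanSpace.proj 1 : E2 →L[ℝ] ℝ)) x := by
    refine (((key hf₁ hk₁).add (key hf₂ hk₂)).congr_of_eventuallyEq hev).congr_fderiv ?_
    ext z
    simp
    ring
  rw [energyDensity, norm_sq_of_hasFDerivAt hd, hev.eq_of_nhds, stripDensity]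
  ring

lemma density_neg_pos {f₁ k₁ f₂ k₂ : ℝ → ℝ} {c R : ℝ} (hf₁ : IsProfile f₁ c)
    (hk₁ : IsCutoff k₁ R) (hf₂ : IsProfile f₂ c) (hk₂ : IsCutoff k₂ R) {x : E2} (h0 : x 0 < 0) (h1 : 0 < x 1) :
    energyDensity (trial f₁ k₁ f₂ k₂) x = stripDensity f₁ k₁ f₂ k₂ (x 1) (-x 0) := by
  have hev : trial f₁ k₁ f₂ k₂ =ᶠ[nhds x]
      fun y => f₁ (-y 0) * k₁ (y 1) + f₂ (-y 0) * k₂ (y 1) := by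
    filter_upwards [(isOpen_quadrant (-1) 1).mem_nhds (x := x) (by simp [h0, h1])] with y hy
    simp only [one_mul] at hy
    rw [trial, piece_neg_pos hk₁ (by linarith [hy.1]) hy.2.le,
      piece_neg_pos hk₂ (by linarith [hy.1]) hy.2.le]
  have key : ∀ {f k : ℝ → ℝ}, IsProfile f c → IsCutoff k R →
      HasFDerivAt (fun y : E2 => f (-y 0) * k (y 1)) _ x := fun {f k} hf hk =>
    ((hf.hasDerivAt (-x 0)).comp_hasFDerivAt x (hasFDerivAt_coord 0 x).fun_neg).mul
      ((hk.hasDerivAt (x 1)).comp_hasFDerivAt x (hasFDerivAt_coord 1 x))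
  have hd : HasFDerivAt (trial f₁ k₁ f₂ k₂)
      ((-(deriv f₁ (-x 0) * k₁ (x 1) + deriv f₂ (-x 0) * k₂ (x 1))) •
        (EuclideanSpace.proj 0 : E2 →L[ℝ] ℝ) +
      (f₁ (-x 0) * deriv k₁ (x 1) + f₂ (-x 0) * deriv k₂ (x 1)) •
        (EuclideanSpace.proj 1 : E2 →L[ℝ] ℝ)) x := by
    refine (((key hf₁ hk₁).add (key hf₂ hk₂)).congr_of_eventuallyEq hev).congr_fderiv ?_
    ext z
    simp
    ring
  rw [energyDensity, norm_sq_of_hasFDerivAt hd, hev.eq_of_nhds, stripDensity]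
  ring

lemma density_neg_neg {f₁ k₁ f₂ k₂ : ℝ → ℝ} {c R : ℝ} (hf₁ : IsProfile f₁ c)
    (hk₁ : IsCutoff k₁ R) (hf₂ : IsProfile f₂ c) (hk₂ : IsCutoff k₂ R) {x : E2} (h0 : x 0 < 0) (h1 : x 1 < 0) :
    energyDensity (trial f₁ k₁ f₂ k₂) x = discDensity f₁ f₂ (√(x 0 ^ 2 + x 1 ^ 2)) := by
  have hev : trial f₁ k₁ f₂ k₂ =ᶠ[nhds x]
      fun y => f₁ (√(y 0 ^ 2 + y 1 ^ 2)) + f₂ (√(y 0 ^ 2 + y 1 ^ 2)) := by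
    filter_upwards [(isOpen_quadrant (-1) (-1)).mem_nhds (x := x) (by simp [h0, h1])] with y hy
    have hy : 0 < -1 * y 0 ∧ 0 < -1 * y 1 := hy
    rw [trial, piece_neg_neg hk₁ (by linarith [hy.1]) (by linarith [hy.2]),
      piece_neg_neg hk₂ (by linarith [hy.1]) (by linarith [hy.2])]
  set ρ := √(x 0 ^ 2 + x 1 ^ 2) with hρ
  have hs : 0 < x 0 ^ 2 + x 1 ^ 2 :=
    add_pos (sq_pos_of_ne_zero h0.ne) (sq_pos_of_ne_zero h1.ne)
  have hρ0 : 0 < ρ := Real.sqrt_pos.2 hs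
  have hρ2 : ρ ^ 2 = x 0 ^ 2 + x 1 ^ 2 := Real.sq_sqrt hs.le
  have hr : HasFDerivAt (fun y : E2 => √(y 0 ^ 2 + y 1 ^ 2)) _ x :=
    (((hasFDerivAt_coord 0 x).pow 2).add ((hasFDerivAt_coord 1 x).pow 2)).sqrt hs.ne'
  have key : ∀ {f : ℝ → ℝ}, IsProfile f c →
      HasFDerivAt (fun y : E2 => f (√(y 0 ^ 2 + y 1 ^ 2))) _ x := fun {f} hf =>
    (hf.hasDerivAt ρ).comp_hasFDerivAt x hr
  have hd : HasFDerivAt (trial f₁ k₁ f₂ k₂)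
      (((deriv f₁ ρ + deriv f₂ ρ) * (x 0 / ρ)) • (EuclideanSpace.proj 0 : E2 →L[ℝ] ℝ) +
      ((deriv f₁ ρ + deriv f₂ ρ) * (x 1 / ρ)) • (EuclideanSpace.proj 1 : E2 →L[ℝ] ℝ)) x := by
    refine (((key hf₁).add (key hf₂)).congr_of_eventuallyEq hev).congr_fderiv ?_
    ext z
    simp
    rw [← hρ]
    field_simp
  have h1 : (x 0 / ρ) ^ 2 + (x 1 / ρ) ^ 2 = 1 := by
    rw [div_pow, div_pow, ← add_div, ← hρ2, div_self (by positivity)]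
  rw [energyDensity, norm_sq_of_hasFDerivAt hd, hev.eq_of_nhds, discDensity]
  linear_combination (deriv f₁ ρ + deriv f₂ ρ) ^ 2 * h1

/-! ### Reduction to one-dimensional integrals -/

lemma measurePreserving_toLp :
    MeasurePreserving (fun p : ℝ × ℝ => (!₂[p.1, p.2] : E2)) volume volume := by
  have h1 := (volume_preserving_finTwoArrow ℝ).symm
  have h2 := PiLp.volume_preserving_toLp (Fin 2)
  exact h2.comp h1

lemma integral_E2 (g : E2 → ℝ) : ∫ x, g x = ∫ p : ℝ × ℝ, g !₂[p.1, p.2] := by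
  refine (measurePreserving_toLp.integral_comp ?_ g).symm
  have h1 := (MeasurableEquiv.finTwoArrow (α := ℝ)).symm.measurableEmbedding
  have h2 := (MeasurableEquiv.toLp 2 (Fin 2 → ℝ)).measurableEmbedding
  exact h2.comp h1

lemma integrable_E2 {g : E2 → ℝ} (hg : Integrable g) :
    Integrable (fun p : ℝ × ℝ => g !₂[p.1, p.2]) :=
  measurePreserving_toLp.integrable_comp_of_integrable hg

/-- Polar coordinates on the quarter plane `{x < 0, y < 0}`, which has opening angle `π / 2`. -/
lemma integral_quarter (F : ℝ → ℝ) (hF : ∀ r, 1 ≤ r → F r = 0) :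
    ∫ p in (Iio (0 : ℝ) ×ˢ Iio (0 : ℝ)), F (√(p.1 ^ 2 + p.2 ^ 2)) =
      π / 2 * ∫ r in (0 : ℝ)..1, r * F r := by
  rw [← integral_indicator (measurableSet_Iio.prod measurableSet_Iio),
    ← integral_comp_polarCoord_symm]
  have hcongr : ∀ p ∈ polarCoord.target,
      p.1 • ((Iio (0 : ℝ) ×ˢ Iio (0 : ℝ)).indicator
        (fun p : ℝ × ℝ => F (√(p.1 ^ 2 + p.2 ^ 2))) (polarCoord.symm p)) =
      (p.1 * F p.1) * (Ioo (-π) (-(π / 2))).indicator (fun _ => (1 : ℝ)) p.2 := by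
    rintro ⟨r, θ⟩ ⟨hr, hθ⟩
    have hr : 0 < r := hr
    have hθ : θ ∈ Ioo (-π) π := hθ
    simp only [polarCoord_symm_apply, smul_eq_mul]
    by_cases h : θ ∈ Ioo (-π) (-(π / 2))
    · have hc : cos θ < 0 := by
        rw [← cos_neg]
        exact cos_neg_of_pi_div_two_lt_of_lt (by linarith [h.2]) (by linarith [h.1, pi_pos])
      have hs : sin θ < 0 := sin_neg_of_neg_of_neg_pi_lt (by linarith [h.2, pi_pos]) h.1
      have hm : (r * cos θ, r * sin θ) ∈ (Iio (0 : ℝ) ×ˢ Iio (0 : ℝ)) :=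
        ⟨mul_neg_of_pos_of_neg hr hc, mul_neg_of_pos_of_neg hr hs⟩
      have hq : (r * cos θ) ^ 2 + (r * sin θ) ^ 2 = r ^ 2 := by
        linear_combination r ^ 2 * sin_sq_add_cos_sq θ
      rw [indicator_of_mem hm, indicator_of_mem h, mul_one]
      simp only [hq, Real.sqrt_sq hr.le]
    · rw [indicator_of_notMem h, indicator_of_notMem, mul_zero, mul_zero]
      rintro ⟨h1, h2⟩
      have hc : cos θ < 0 := by
        by_contra! hc
        exact absurd (mul_nonneg hr.le hc) (not_le.2 h1)
      have hs : sin θ < 0 := by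
        by_contra! hc
        exact absurd (mul_nonneg hr.le hc) (not_le.2 h2)
      have hθ0 : θ < 0 := by
        by_contra! h0
        exact absurd (sin_nonneg_of_nonneg_of_le_pi h0 hθ.2.le) (not_le.2 hs)
      apply h
      refine ⟨hθ.1, ?_⟩
      by_contra! h0
      exact absurd (cos_nonneg_of_neg_pi_div_two_le_of_le h0 (by linarith [pi_pos])) (not_le.2 hc)
  rw [setIntegral_congr_fun polarCoord.open_target.measurableSet hcongr]
  have ht : polarCoord.target = Ioi (0 : ℝ) ×ˢ Ioo (-π) π := rfl
  rw [ht, Measure.volume_eq_prod, setIntegral_prod_mul (fun r => r * F r), mul_comm]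
  congr 1
  · rw [setIntegral_indicator measurableSet_Ioo, Ioo_inter_Ioo]
    simp
    rw [min_eq_right (by linarith [pi_pos]), max_eq_left (by linarith [pi_pos])]
    ring
  · rw [intervalIntegral.integral_of_le zero_le_one]
    refine setIntegral_eq_of_subset_of_forall_sdiff_eq_zero measurableSet_Ioi
      Ioc_subset_Ioi_self ?_
    rintro r ⟨h1, h2⟩
    have : 1 ≤ r := by
      by_contra! h
      exact h2 ⟨h1, h.le⟩
    rw [hF r this, mul_zero]

lemma volume_eq_halfLines :
    (volume : Measure ℝ) = volume.restrict (Ioi 0) + volume.restrict (Iio 0) := by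
  conv_lhs => rw [← Measure.restrict_add_restrict_compl (μ := volume) (measurableSet_Ioi (a := (0 : ℝ)))]
  rw [compl_Ioi, Measure.restrict_congr_set Iio_ae_eq_Iic]

lemma integral_quadrants {g : ℝ × ℝ → ℝ} (hg : Integrable g) :
    ∫ p, g p = (∫ p in Ioi (0 : ℝ) ×ˢ Ioi (0 : ℝ), g p) + (∫ p in Ioi (0 : ℝ) ×ˢ Iio (0 : ℝ), g p)
      + ((∫ p in Iio (0 : ℝ) ×ˢ Ioi (0 : ℝ), g p) + ∫ p in Iio (0 : ℝ) ×ˢ Iio (0 : ℝ), g p) := by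
  have hv : (volume : Measure (ℝ × ℝ)) = (volume.restrict (Ioi (0 : ℝ) ×ˢ Ioi (0 : ℝ)) +
      volume.restrict (Ioi (0 : ℝ) ×ˢ Iio (0 : ℝ))) + (volume.restrict (Iio (0 : ℝ) ×ˢ Ioi (0 : ℝ)) +
      volume.restrict (Iio (0 : ℝ) ×ˢ Iio (0 : ℝ))) := by
    simp only [Measure.volume_eq_prod, ← Measure.prod_restrict]
    rw [← Measure.prod_add, ← Measure.prod_add, ← Measure.add_prod, ← volume_eq_halfLines]
  conv_lhs => rw [hv]
  have hi : ∀ s : Set (ℝ × ℝ), Integrable g (volume.restrict s) := fun s => hg.restrict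
  rw [integral_add_measure ((hi _).add_measure (hi _)) ((hi _).add_measure (hi _)),
    integral_add_measure (hi _) (hi _), integral_add_measure (hi _) (hi _)]

lemma integral_neg_halfLine (F : ℝ → ℝ) (hF : ∀ r, 1 < r → F r = 0) :
    ∫ b in Iio (0 : ℝ), F (-b) = ∫ r in (0 : ℝ)..1, F r := by
  rw [← integral_Iic_eq_integral_Iio, integral_comp_neg_Iic, neg_zero,
    intervalIntegral.integral_of_le zero_le_one]
  refine setIntegral_eq_of_subset_of_forall_sdiff_eq_zero measurableSet_Ioi
    Ioc_subset_Ioi_self ?_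
  rintro r ⟨h1, h2⟩
  apply hF
  by_contra! h
  exact h2 ⟨h1, h⟩

lemma integral_pos_halfLine (F : ℝ → ℝ) {R : ℝ} (hR : 0 ≤ R) (hF : ∀ r, R < r → F r = 0) :
    ∫ a in Ioi (0 : ℝ), F a = ∫ t in (0 : ℝ)..R, F t := by
  rw [intervalIntegral.integral_of_le hR]
  refine setIntegral_eq_of_subset_of_forall_sdiff_eq_zero measurableSet_Ioi
    Ioc_subset_Ioi_self ?_
  rintro r ⟨h1, h2⟩
  apply hF
  by_contra! h
  exact h2 ⟨h1, h⟩

lemma IsCutoff.deriv_eq_zero {k : ℝ → ℝ} {R : ℝ} (hk : IsCutoff k R) {t : ℝ} (ht : R < t) :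
    deriv k t = 0 := by
  have : k =ᶠ[nhds t] fun _ => 0 := by
    filter_upwards [Ioi_mem_nhds ht] with s hs using hk.zero s (le_of_lt hs)
  rw [this.deriv_eq]; simp

lemma IsProfile.deriv_eq_zero {f : ℝ → ℝ} {c : ℝ} (hf : IsProfile f c) {r : ℝ} (hr : 1 - c < r) :
    deriv f r = 0 := by
  have : f =ᶠ[nhds r] fun _ => 0 := by
    filter_upwards [Ioi_mem_nhds hr] with s hs using hf.zero_right s hs
  rw [this.deriv_eq]; simp

lemma contDiff_trial {f₁ k₁ f₂ k₂ : ℝ → ℝ} {c R : ℝ} (hf₁ : IsProfile f₁ c)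
    (hk₁ : IsCutoff k₁ R) (hf₂ : IsProfile f₂ c) (hk₂ : IsCutoff k₂ R) : ContDiff ℝ 1 (trial f₁ k₁ f₂ k₂) :=
  (contDiff_piece hf₁ hk₁).add (contDiff_piece hf₂ hk₂)

lemma integrable_grad {f₁ k₁ f₂ k₂ : ℝ → ℝ} {c R : ℝ} (hf₁ : IsProfile f₁ c)
    (hk₁ : IsCutoff k₁ R) (hf₂ : IsProfile f₂ c) (hk₂ : IsCutoff k₂ R) : Integrable fun x => ‖fderiv ℝ (trial f₁ k₁ f₂ k₂) x‖ ^ 2 := by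
  have hc := (contDiff_trial hf₁ hk₁ hf₂ hk₂).continuous_fderiv one_ne_zero
  have hs := (hasCompactSupport_trial hf₁ hk₁ hf₂ hk₂).fderiv (𝕜 := ℝ)
  refine (hc.norm.pow 2).integrable_of_hasCompactSupport (hs.mono fun x hx hx' => hx ?_)
  simp [hx']

lemma integrable_sq {f₁ k₁ f₂ k₂ : ℝ → ℝ} {c R : ℝ} (hf₁ : IsProfile f₁ c)
    (hk₁ : IsCutoff k₁ R) (hf₂ : IsProfile f₂ c) (hk₂ : IsCutoff k₂ R) : Integrable fun x => (trial f₁ k₁ f₂ k₂ x) ^ 2 := by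
  have hc := (contDiff_trial hf₁ hk₁ hf₂ hk₂).continuous
  have hs := hasCompactSupport_trial hf₁ hk₁ hf₂ hk₂
  refine (hc.pow 2).integrable_of_hasCompactSupport (hs.mono fun x hx hx' => hx ?_)
  simp [hx']

lemma tsupport_trial_subset {f₁ k₁ f₂ k₂ : ℝ → ℝ} {c R : ℝ} (hf₁ : IsProfile f₁ c)
    (hk₁ : IsCutoff k₁ R) (hf₂ : IsProfile f₂ c) (hk₂ : IsCutoff k₂ R) : tsupport (trial f₁ k₁ f₂ k₂) ⊆ GamSharp := fun _ hx =>
  mem_GamSharp_of_Icc hf₁.pos (trial_support hf₁ hk₁ hf₂ hk₂ hx).1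

lemma energy_eq_integral {f₁ k₁ f₂ k₂ : ℝ → ℝ} {c R : ℝ} (hf₁ : IsProfile f₁ c)
    (hk₁ : IsCutoff k₁ R) (hf₂ : IsProfile f₂ c) (hk₂ : IsCutoff k₂ R) :
    (∫ x in GamSharp, ‖fderiv ℝ (trial f₁ k₁ f₂ k₂) x‖ ^ 2) -
      π ^ 2 * ∫ x in GamSharp, (trial f₁ k₁ f₂ k₂ x) ^ 2 =
    ∫ x, energyDensity (trial f₁ k₁ f₂ k₂) x := by
  have hsub := tsupport_trial_subset hf₁ hk₁ hf₂ hk₂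
  rw [setIntegral_eq_integral_of_forall_compl_eq_zero,
    setIntegral_eq_integral_of_forall_compl_eq_zero, ← integral_const_mul, ← integral_sub]
  · rfl
  · exact integrable_grad hf₁ hk₁ hf₂ hk₂
  · exact (integrable_sq hf₁ hk₁ hf₂ hk₂).const_mul _
  · intro x hx
    rw [image_eq_zero_of_notMem_tsupport fun h => hx (hsub h)]; norm_num
  · intro x hx
    rw [fderiv_of_notMem_tsupport (𝕜 := ℝ) fun h => hx (hsub h)]; simp

lemma integral_strip_iter {f₁ k₁ f₂ k₂ : ℝ → ℝ} {c R : ℝ} (hf₁ : IsProfile f₁ c)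
    (hk₁ : IsCutoff k₁ R) (hf₂ : IsProfile f₂ c) (hk₂ : IsCutoff k₂ R) (hR : 0 ≤ R) :
    (∫ b in Iio (0 : ℝ), ∫ a in Ioi (0 : ℝ), stripDensity f₁ k₁ f₂ k₂ a (-b)) =
      ∫ r in (0 : ℝ)..1, ∫ t in (0 : ℝ)..R, stripDensity f₁ k₁ f₂ k₂ t r := by
  rw [integral_neg_halfLine (fun r => ∫ a in Ioi (0 : ℝ), stripDensity f₁ k₁ f₂ k₂ a r)]
  · congr 1
    ext r
    apply integral_pos_halfLine _ hR
    intro t ht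
    simp [stripDensity, hk₁.zero t ht.le, hk₂.zero t ht.le, hk₁.deriv_eq_zero ht,
      hk₂.deriv_eq_zero ht]
  · intro r hr
    have hr' : 1 - c < r := by linarith [hf₁.pos]
    simp [stripDensity, hf₁.zero_right r hr', hf₂.zero_right r hr', hf₁.deriv_eq_zero hr',
      hf₂.deriv_eq_zero hr']

/-- The quarter disc and the two congruent half-strips carry the whole energy of the trial function. -/
lemma energy_formula {f₁ k₁ f₂ k₂ : ℝ → ℝ} {c R : ℝ} (hf₁ : IsProfile f₁ c)
    (hk₁ : IsCutoff k₁ R) (hf₂ : IsProfile f₂ c) (hk₂ : IsCutoff k₂ R) (hR : 0 ≤ R) :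
    (∫ x in GamSharp, ‖fderiv ℝ (trial f₁ k₁ f₂ k₂) x‖ ^ 2) -
      π ^ 2 * ∫ x in GamSharp, (trial f₁ k₁ f₂ k₂ x) ^ 2 =
    π / 2 * (∫ r in (0 : ℝ)..1, r * discDensity f₁ f₂ r) +
      2 * ∫ r in (0 : ℝ)..1, ∫ t in (0 : ℝ)..R, stripDensity f₁ k₁ f₂ k₂ t r := by
  rw [energy_eq_integral hf₁ hk₁ hf₂ hk₂, integral_E2]
  have hint : Integrable fun p : ℝ × ℝ => energyDensity (trial f₁ k₁ f₂ k₂) !₂[p.1, p.2] :=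
    integrable_E2 ((integrable_grad hf₁ hk₁ hf₂ hk₂).sub
      ((integrable_sq hf₁ hk₁ hf₂ hk₂).const_mul _))
  have hpn : ∀ p ∈ Ioi (0 : ℝ) ×ˢ Iio (0 : ℝ),
      energyDensity (trial f₁ k₁ f₂ k₂) !₂[p.1, p.2] = stripDensity f₁ k₁ f₂ k₂ p.1 (-p.2) := by
    rintro ⟨a, b⟩ ⟨ha, hb⟩
    have := density_pos_neg hf₁ hk₁ hf₂ hk₂ (x := !₂[a, b]) (by simpa using ha) (by simpa using hb)
    simpa using this
  have hnp : ∀ p ∈ Iio (0 : ℝ) ×ˢ Ioi (0 : ℝ),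
      energyDensity (trial f₁ k₁ f₂ k₂) !₂[p.1, p.2] = stripDensity f₁ k₁ f₂ k₂ p.2 (-p.1) := by
    rintro ⟨a, b⟩ ⟨ha, hb⟩
    have := density_neg_pos hf₁ hk₁ hf₂ hk₂ (x := !₂[a, b]) (by simpa using ha) (by simpa using hb)
    simpa using this
  have hnn : ∀ p ∈ Iio (0 : ℝ) ×ˢ Iio (0 : ℝ),
      energyDensity (trial f₁ k₁ f₂ k₂) !₂[p.1, p.2] =
        discDensity f₁ f₂ (√(p.1 ^ 2 + p.2 ^ 2)) := by
    rintro ⟨a, b⟩ ⟨ha, hb⟩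
    have := density_neg_neg hf₁ hk₁ hf₂ hk₂ (x := !₂[a, b]) (by simpa using ha) (by simpa using hb)
    simpa using this
  have hpp : ∀ p ∈ Ioi (0 : ℝ) ×ˢ Ioi (0 : ℝ),
      energyDensity (trial f₁ k₁ f₂ k₂) !₂[p.1, p.2] = 0 := by
    rintro ⟨a, b⟩ ⟨ha, hb⟩
    exact density_pos_pos hf₁ hf₂ (by simpa using ha) (by simpa using hb)
  have hm1 := (measurableSet_Ioi (a := (0 : ℝ))).prod (measurableSet_Iio (a := (0 : ℝ)))
  have hm2 := (measurableSet_Iio (a := (0 : ℝ))).prod (measurableSet_Ioi (a := (0 : ℝ)))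
  have hi1 : IntegrableOn (fun p : ℝ × ℝ => stripDensity f₁ k₁ f₂ k₂ p.1 (-p.2))
      (Ioi (0 : ℝ) ×ˢ Iio (0 : ℝ)) := hint.integrableOn.congr_fun hpn hm1
  have hi2 : IntegrableOn (fun p : ℝ × ℝ => stripDensity f₁ k₁ f₂ k₂ p.2 (-p.1))
      (Iio (0 : ℝ) ×ˢ Ioi (0 : ℝ)) := hint.integrableOn.congr_fun hnp hm2
  rw [integral_quadrants hint, setIntegral_eq_zero_of_forall_eq_zero hpp,
    setIntegral_congr_fun hm1 hpn, setIntegral_congr_fun hm2 hnp,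
    setIntegral_congr_fun (measurableSet_Iio.prod measurableSet_Iio) hnn,
    integral_quarter (discDensity f₁ f₂)]
  · have e1 : ∫ p in Ioi (0 : ℝ) ×ˢ Iio (0 : ℝ), stripDensity f₁ k₁ f₂ k₂ p.1 (-p.2) =
        ∫ r in (0 : ℝ)..1, ∫ t in (0 : ℝ)..R, stripDensity f₁ k₁ f₂ k₂ t r := by
      rw [← integral_strip_iter hf₁ hk₁ hf₂ hk₂ hR]
      rw [IntegrableOn, Measure.volume_eq_prod, ← Measure.prod_restrict] at hi1
      rw [Measure.volume_eq_prod, ← Measure.prod_restrict, integral_prod_symm _ hi1]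
    have e2 : ∫ p in Iio (0 : ℝ) ×ˢ Ioi (0 : ℝ), stripDensity f₁ k₁ f₂ k₂ p.2 (-p.1) =
        ∫ r in (0 : ℝ)..1, ∫ t in (0 : ℝ)..R, stripDensity f₁ k₁ f₂ k₂ t r := by
      rw [← integral_strip_iter hf₁ hk₁ hf₂ hk₂ hR]
      rw [Measure.volume_eq_prod] at hi2 ⊢
      rw [setIntegral_prod _ hi2]
    rw [e1, e2]
    ring
  · intro r hr
    have hr' : 1 - c < r := by linarith [hf₁.pos]
    simp [discDensity, hf₁.zero_right r hr', hf₂.zero_right r hr', hf₁.deriv_eq_zero hr',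
      hf₂.deriv_eq_zero hr']

/-! ### Compactly supported approximation of the sine profile -/

/-- A smooth approximation of `sin (π r)` on `[0, 1]`, multiplied by a function of `n r (1 - r)` that
vanishes near and outside the endpoints. -/
def sinApprox (n : ℕ) (r : ℝ) : ℝ := sin (π * r) * smoothTransition (n * (r * (1 - r)) - 1)

lemma isProfile_sinApprox (n : ℕ) : IsProfile (sinApprox n) (1 / (n + 1)) where
  smooth := by
    have : ContDiff ℝ 1 smoothTransition := smoothTransition.contDiff
    unfold sinApprox
    fun_prop
  pos := by positivity
  zero_left := by
    intro r hr
    have hn : (0 : ℝ) ≤ n := n.cast_nonneg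
    rw [lt_div_iff₀ (by positivity)] at hr
    rw [sinApprox, smoothTransition.zero_of_nonpos, mul_zero]
    nlinarith [mul_nonneg hn (sq_nonneg r), sq_nonneg r]
  zero_right := by
    intro r hr
    have hn : (0 : ℝ) ≤ n := n.cast_nonneg
    have hr : 1 - r < 1 / ((n : ℝ) + 1) := by linarith
    rw [lt_div_iff₀ (by positivity)] at hr
    rw [sinApprox, smoothTransition.zero_of_nonpos, mul_zero]
    nlinarith [mul_nonneg hn (sq_nonneg (1 - r)), sq_nonneg (1 - r)]

lemma hasDerivAt_smoothTransition (x : ℝ) :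
    HasDerivAt smoothTransition (deriv smoothTransition x) x :=
  ((smoothTransition.contDiff (n := 1)).differentiable one_ne_zero x).hasDerivAt

lemma deriv_smoothTransition_of_one_lt {x : ℝ} (hx : 1 < x) : deriv smoothTransition x = 0 := by
  have : smoothTransition =ᶠ[nhds x] fun _ => 1 := by
    filter_upwards [Ioi_mem_nhds hx] with s hs using smoothTransition.one_of_one_le (le_of_lt hs)
  rw [this.deriv_eq]; simp

lemma deriv_smoothTransition_of_neg {x : ℝ} (hx : x < 0) : deriv smoothTransition x = 0 := by
  have : smoothTransition =ᶠ[nhds x] fun _ => 0 := by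
    filter_upwards [Iio_mem_nhds hx] with s hs using smoothTransition.zero_of_nonpos (le_of_lt hs)
  rw [this.deriv_eq]; simp

lemma exists_bound_deriv_smoothTransition : ∃ C, 0 ≤ C ∧ ∀ x, |deriv smoothTransition x| ≤ C := by
  have hc : Continuous (deriv smoothTransition) :=
    (smoothTransition.contDiff (n := 1)).continuous_deriv le_rfl
  obtain ⟨C, hC⟩ := (isCompact_Icc (a := (0 : ℝ)) (b := 1)).exists_bound_of_continuousOn
    hc.continuousOn
  have hC0 : 0 ≤ C := (norm_nonneg _).trans (hC 0 (by simp))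
  refine ⟨C, hC0, fun x => ?_⟩
  rcases lt_or_ge x 0 with h | h
  · rw [deriv_smoothTransition_of_neg h]; simpa
  rcases lt_or_ge 1 x with h' | h'
  · rw [deriv_smoothTransition_of_one_lt h']; simpa
  · exact hC x ⟨h, h'⟩

lemma deriv_sinApprox (n : ℕ) (r : ℝ) : deriv (sinApprox n) r =
    π * cos (π * r) * smoothTransition (n * (r * (1 - r)) - 1) +
      sin (π * r) * (deriv smoothTransition (n * (r * (1 - r)) - 1) * (n * (1 - 2 * r))) := by
  have h1 : HasDerivAt (fun r : ℝ => sin (π * r)) (π * cos (π * r)) r := by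
    have := (hasDerivAt_id r).const_mul π |>.sin
    simpa [mul_comm] using this
  have h2 : HasDerivAt (fun r : ℝ => (n : ℝ) * (r * (1 - r)) - 1) (n * (1 - 2 * r)) r := by
    have := ((((hasDerivAt_id r).mul ((hasDerivAt_id r).const_sub 1)).const_mul (n : ℝ)).sub_const 1)
    refine this.congr_deriv ?_
    simp; ring_nf; simp
  exact (h1.mul ((hasDerivAt_smoothTransition _).comp r h2)).deriv

lemma abs_sin_le {r : ℝ} (h0 : 0 ≤ r) (h1 : r ≤ 1) : |sin (π * r)| ≤ 2 * π * (r * (1 - r)) := by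
  have hpi := pi_pos
  rw [abs_of_nonneg (sin_nonneg_of_nonneg_of_le_pi (by positivity) (by nlinarith))]
  rcases le_total r (1 / 2) with h | h
  · refine (sin_le (by positivity)).trans ?_
    have : r ≤ 2 * (r * (1 - r)) := by nlinarith
    nlinarith
  · have : sin (π * r) = sin (π * (1 - r)) := by rw [← sin_pi_sub]; ring_nf
    rw [this]
    refine (sin_le (by nlinarith)).trans ?_
    have : 1 - r ≤ 2 * (r * (1 - r)) := by nlinarith
    nlinarith

/-- The derivative of the cutoff factor is of size `n`, but it lives where `n r (1 - r) ≤ 2`, and there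
`|sin (π r)| ≤ 2 π r (1 - r) ≤ 4 π / n`; hence the bounds are uniform in `n`. -/
lemma exists_bound_sinApprox : ∃ K, ∀ n : ℕ, ∀ r ∈ Icc (0 : ℝ) 1,
    sinApprox n r ∈ Icc (-K) K ∧ deriv (sinApprox n) r ∈ Icc (-K) K := by
  obtain ⟨C, hC0, hC⟩ := exists_bound_deriv_smoothTransition
  have hT : ∀ x, |smoothTransition x| ≤ 1 := fun x => by
    rw [abs_of_nonneg (smoothTransition.nonneg x)]; exact smoothTransition.le_one x
  refine ⟨π + 4 * π * C + 1, fun n r hr => ?_⟩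
  have hpi := pi_pos
  have hn : (0 : ℝ) ≤ n := n.cast_nonneg
  rw [mem_Icc, mem_Icc, ← abs_le, ← abs_le]
  constructor
  · rw [sinApprox, abs_mul]
    have := mul_le_mul (abs_sin_le_one (π * r)) (hT (n * (r * (1 - r)) - 1)) (abs_nonneg _)
      zero_le_one
    have : 0 ≤ 4 * π * C := by positivity
    linarith
  · rw [deriv_sinApprox]
    refine (abs_add_le _ _).trans ?_
    have a1 : |π * cos (π * r) * smoothTransition (n * (r * (1 - r)) - 1)| ≤ π := by
      rw [abs_mul, abs_mul, abs_of_pos hpi]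
      have := mul_le_mul (abs_cos_le_one (π * r)) (hT (n * (r * (1 - r)) - 1)) (abs_nonneg _)
        zero_le_one
      nlinarith
    have a2 : |sin (π * r) * (deriv smoothTransition (n * (r * (1 - r)) - 1) * (n * (1 - 2 * r)))|
        ≤ 4 * π * C := by
      rcases lt_or_ge 1 (n * (r * (1 - r)) - 1) with h | h
      · rw [deriv_smoothTransition_of_one_lt h]; simp; positivity
      · rw [abs_mul, abs_mul, abs_mul, abs_of_nonneg hn]
        have b1 := abs_sin_le hr.1 hr.2
        have b2 : |1 - 2 * r| ≤ 1 := by rw [abs_le]; constructor <;> linarith [hr.1, hr.2]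
        have b3 : |sin (π * r)| * n ≤ 4 * π := by
          calc |sin (π * r)| * n ≤ 2 * π * (r * (1 - r)) * n := by gcongr
            _ = 2 * π * (n * (r * (1 - r))) := by ring
            _ ≤ 2 * π * 2 := by gcongr; linarith
            _ = 4 * π := by ring
        calc |sin (π * r)| * (|deriv smoothTransition (n * (r * (1 - r)) - 1)| * (n * |1 - 2 * r|))
            = (|sin (π * r)| * n) * |deriv smoothTransition (n * (r * (1 - r)) - 1)| * |1 - 2 * r|
              := by ring
          _ ≤ (4 * π) * C * 1 := by gcongr; exact hC _
          _ = 4 * π * C := by ring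
    linarith

lemma eventually_sinApprox {r : ℝ} (h0 : 0 < r) (h1 : r < 1) : ∀ᶠ n : ℕ in Filter.atTop,
    sinApprox n r = sin (π * r) ∧ deriv (sinApprox n) r = π * cos (π * r) := by
  have hw : 0 < r * (1 - r) := mul_pos h0 (by linarith)
  have ht : Filter.Tendsto (fun n : ℕ => (n : ℝ) * (r * (1 - r))) Filter.atTop Filter.atTop :=
    tendsto_natCast_atTop_atTop.atTop_mul_const hw
  filter_upwards [ht.eventually_gt_atTop 2] with n hn
  have h : 1 < (n : ℝ) * (r * (1 - r)) - 1 := by linarith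
  rw [deriv_sinApprox, sinApprox, smoothTransition.one_of_one_le h.le,
    deriv_smoothTransition_of_one_lt h]
  constructor <;> ring

lemma tendsto_integral_sinApprox {Φ : ℝ → ℝ → ℝ → ℝ}
    (hΦ : Continuous fun p : ℝ × ℝ × ℝ => Φ p.1 p.2.1 p.2.2) :
    Filter.Tendsto (fun n : ℕ => ∫ r in (0 : ℝ)..1, Φ r (sinApprox n r) (deriv (sinApprox n) r))
      Filter.atTop (nhds (∫ r in (0 : ℝ)..1, Φ r (sin (π * r)) (π * cos (π * r)))) := by
  obtain ⟨K, hK⟩ := exists_bound_sinApprox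
  obtain ⟨M, hM⟩ := ((isCompact_Icc (a := (0 : ℝ)) (b := 1)).prod
    ((isCompact_Icc (a := -K) (b := K)).prod
      (isCompact_Icc (a := -K) (b := K)))).exists_bound_of_continuousOn hΦ.continuousOn
  refine intervalIntegral.tendsto_integral_filter_of_dominated_convergence (fun _ => M) ?_ ?_ ?_ ?_
  · refine Filter.Eventually.of_forall fun n => ?_
    have c1 := (isProfile_sinApprox n).smooth.continuous
    have c2 := (isProfile_sinApprox n).smooth.continuous_deriv le_rfl
    exact (hΦ.comp (continuous_id.prodMk (c1.prodMk c2))).aestronglyMeasurable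
  · refine Filter.Eventually.of_forall fun n => Filter.Eventually.of_forall fun r hr => ?_
    rw [uIoc_of_le zero_le_one] at hr
    have hr' : r ∈ Icc (0 : ℝ) 1 := ⟨hr.1.le, hr.2⟩
    exact hM (r, sinApprox n r, deriv (sinApprox n) r) ⟨hr', hK n r hr'⟩
  · exact intervalIntegrable_const
  · have : ∀ᵐ r : ℝ, r ≠ 1 := by simp [ae_iff]
    filter_upwards [this] with r hr1 hr
    rw [uIoc_of_le zero_le_one] at hr
    refine tendsto_const_nhds.congr' ?_
    filter_upwards [eventually_sinApprox hr.1 (lt_of_le_of_ne hr.2 hr1)] with n hn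
    rw [hn.1, hn.2]

/-! ### Cutoffs along the strips -/

/-- The short-range cutoff, `1` for `t ≤ 0` and `0` for `t ≥ 1`. -/
def cutoff (t : ℝ) : ℝ := smoothTransition (1 - t)

lemma contDiff_cutoff : ContDiff ℝ 1 cutoff := by
  have : ContDiff ℝ 1 smoothTransition := smoothTransition.contDiff
  unfold cutoff
  fun_prop

lemma isCutoff_cutoff {R : ℝ} (hR : 1 ≤ R) : IsCutoff cutoff R where
  smooth := contDiff_cutoff
  one := fun t ht => smoothTransition.one_of_one_le (by linarith)
  zero := fun t ht => smoothTransition.zero_of_nonpos (by linarith)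

/-- The long-range cutoff, `1` for `t ≤ L` and `0` for `t ≥ 2 L`. -/
def longCutoff (L t : ℝ) : ℝ := cutoff (t / L - 1)

lemma isCutoff_longCutoff {L : ℝ} (hL : 0 < L) : IsCutoff (longCutoff L) (2 * L) where
  smooth := by
    have := contDiff_cutoff
    unfold longCutoff
    fun_prop
  one := fun t ht => (isCutoff_cutoff le_rfl).one _ (by
    have := div_nonpos_of_nonpos_of_nonneg ht hL.le
    linarith)
  zero := fun t ht => (isCutoff_cutoff le_rfl).zero _ (by
    have : 2 ≤ t / L := by rwa [le_div_iff₀ hL]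
    linarith)

lemma deriv_longCutoff (L t : ℝ) : deriv (longCutoff L) t = deriv cutoff (t / L - 1) / L := by
  have h1 : HasDerivAt (fun t : ℝ => t / L - 1) (1 / L) t :=
    ((hasDerivAt_id t).div_const L).sub_const 1
  have h2 := ((isCutoff_cutoff le_rfl).hasDerivAt (t / L - 1)).comp t h1
  rw [show longCutoff L = cutoff ∘ fun t : ℝ => t / L - 1 from rfl, h2.deriv]
  ring

/-- The long cutoff is constant where the short one varies. -/
lemma deriv_mul_deriv_cutoff {L : ℝ} (hL : 1 < L) (t : ℝ) :
    deriv (longCutoff L) t * deriv cutoff t = 0 := by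
  rcases lt_or_ge 1 t with h | h
  · rw [(isCutoff_cutoff le_rfl).deriv_eq_zero h, mul_zero]
  · have h0 : t / L - 1 < 0 := by
      have : t / L < 1 := by rw [div_lt_one (by linarith)]; linarith
      linarith
    have : cutoff =ᶠ[nhds (t / L - 1)] fun _ => 1 := by
      filter_upwards [Iio_mem_nhds h0] with s hs using
        (isCutoff_cutoff le_rfl).one s (le_of_lt hs)
    rw [deriv_longCutoff, this.deriv_eq]; simp

lemma integral_deriv_longCutoff_sq {L : ℝ} (hL : 0 < L) :
    ∫ t in (0 : ℝ)..(2 * L), deriv (longCutoff L) t ^ 2 =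
      (∫ t in (-1 : ℝ)..1, deriv cutoff t ^ 2) / L := by
  simp only [deriv_longCutoff, div_pow]
  rw [intervalIntegral.integral_div,
    intervalIntegral.integral_comp_div_sub (fun t => deriv cutoff t ^ 2) hL.ne' 1]
  have : 2 * L / L - 1 = 1 := by field_simp; norm_num
  rw [this, zero_div, zero_sub, smul_eq_mul]
  field_simp

lemma integral_eq_of_one_le {F : ℝ → ℝ} (hF : ∀ t, 1 < t → F t = 0) {R : ℝ} (hR : 1 ≤ R) :
    ∫ t in (0 : ℝ)..R, F t = ∫ t in (0 : ℝ)..1, F t := by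
  rw [← integral_pos_halfLine F zero_le_one hF, ← integral_pos_halfLine F (by linarith)]
  exact fun t ht => hF t (by linarith)

/-- The cross-section of the strip energy at fixed `r`, as a quadratic form in the profiles. -/
lemma integral_strip_inner {f₁ k₁ f₂ k₂ : ℝ → ℝ} {R : ℝ} (hk₁ : IsCutoff k₁ R)
    (hk₂ : IsCutoff k₂ R) (h0 : ∀ t, deriv k₁ t * deriv k₂ t = 0) (r : ℝ) :
    ∫ t in (0 : ℝ)..R, stripDensity f₁ k₁ f₂ k₂ t r =
      (deriv f₁ r ^ 2 - π ^ 2 * f₁ r ^ 2) * (∫ t in (0 : ℝ)..R, k₁ t ^ 2) +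
      2 * (deriv f₁ r * deriv f₂ r - π ^ 2 * (f₁ r * f₂ r)) * (∫ t in (0 : ℝ)..R, k₁ t * k₂ t) +
      (deriv f₂ r ^ 2 - π ^ 2 * f₂ r ^ 2) * (∫ t in (0 : ℝ)..R, k₂ t ^ 2) +
      f₁ r ^ 2 * (∫ t in (0 : ℝ)..R, deriv k₁ t ^ 2) +
      f₂ r ^ 2 * (∫ t in (0 : ℝ)..R, deriv k₂ t ^ 2) := by
  have c1 := hk₁.smooth.continuous
  have c2 := hk₂.smooth.continuous
  have d1 := hk₁.smooth.continuous_deriv le_rfl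
  have d2 := hk₂.smooth.continuous_deriv le_rfl
  simp only [← intervalIntegral.integral_const_mul]
  rw [← intervalIntegral.integral_add, ← intervalIntegral.integral_add,
    ← intervalIntegral.integral_add, ← intervalIntegral.integral_add]
  · congr 1
    ext t
    rw [stripDensity]
    linear_combination (2 * f₁ r * f₂ r) * h0 t
  all_goals
    apply Continuous.intervalIntegrable
    fun_prop

/-! ### The perturbation and its first-order effect -/

/-- A bump in the distance variable, supported in `[1/8, 3/8]`, where `cos (π r) > 0`. -/
def bumpProfile : ContDiffBump (1 / 4 : ℝ) := ⟨1 / 16, 1 / 8, by norm_num, by norm_num⟩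

lemma bumpProfile_zero {r : ℝ} (h : r ≤ 1 / 8 ∨ 3 / 8 ≤ r) : bumpProfile r = 0 := by
  apply bumpProfile.zero_of_le_dist
  rw [Real.dist_eq]
  change 1 / 8 ≤ _
  rw [le_abs]
  rcases h with h | h
  · right; linarith
  · left; linarith

lemma contDiff_bumpProfile : ContDiff ℝ 1 bumpProfile := bumpProfile.contDiff

lemma isProfile_bump (ε : ℝ) {c : ℝ} (h0 : 0 < c) (hc : c ≤ 1 / 8) :
    IsProfile (fun r => ε * bumpProfile r) c where
  smooth := contDiff_const.mul contDiff_bumpProfile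
  pos := h0
  zero_left := fun r hr => by simp [bumpProfile_zero (r := r) (Or.inl (by linarith))]
  zero_right := fun r hr => by simp [bumpProfile_zero (r := r) (Or.inr (by linarith))]

lemma integral_cos_bump_pos : 0 < ∫ r in (0 : ℝ)..1, cos (π * r) * bumpProfile r := by
  have hc := contDiff_bumpProfile.continuous
  have hpi := pi_pos
  refine intervalIntegral.integral_pos zero_lt_one (by fun_prop) ?_ ⟨1 / 4, by norm_num, ?_⟩
  · intro r hr
    rcases le_total (3 / 8) r with h | h
    · simp [bumpProfile_zero (Or.inr h)]
    · refine mul_nonneg (cos_nonneg_of_neg_pi_div_two_le_of_le ?_ ?_) bumpProfile.nonneg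
      · nlinarith [hr.1]
      · nlinarith
  · refine mul_pos (cos_pos_of_mem_Ioo ⟨by linarith, by linarith⟩) (bumpProfile.pos_of_mem_ball ?_)
    simp [bumpProfile]

lemma hasDerivAt_sin_pi (r : ℝ) : HasDerivAt (fun r : ℝ => sin (π * r)) (π * cos (π * r)) r := by
  have := (hasDerivAt_id r).const_mul π |>.sin
  simpa [mul_comm] using this

lemma hasDerivAt_cos_pi (r : ℝ) :
    HasDerivAt (fun r : ℝ => cos (π * r)) (-(π * sin (π * r))) r := by
  have := (hasDerivAt_id r).const_mul π |>.cos
  simpa [mul_comm] using this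

lemma hasDerivAt_bump (r : ℝ) : HasDerivAt bumpProfile (deriv bumpProfile r) r :=
  (contDiff_bumpProfile.differentiable one_ne_zero r).hasDerivAt

lemma integral_strip_zero :
    ∫ r in (0 : ℝ)..1, ((π * cos (π * r)) ^ 2 - π ^ 2 * sin (π * r) ^ 2) = 0 := by
  rw [intervalIntegral.integral_eq_sub_of_hasDerivAt
    (f := fun r => π * (sin (π * r) * cos (π * r)))]
  · simp
  · intro r _
    refine (((hasDerivAt_sin_pi r).mul (hasDerivAt_cos_pi r)).const_mul π).congr_deriv ?_
    ring
  · apply Continuous.intervalIntegrable; fun_prop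

/-- The profile `sin (π r)` has zero energy on the quarter disc, although `sin (π r)` is not an
eigenfunction there. -/
lemma integral_disc_zero :
    ∫ r in (0 : ℝ)..1, r * ((π * cos (π * r)) ^ 2 - π ^ 2 * sin (π * r) ^ 2) = 0 := by
  rw [intervalIntegral.integral_eq_sub_of_hasDerivAt
    (f := fun r => π * (r * (sin (π * r) * cos (π * r))) - sin (π * r) ^ 2 / 2)]
  · simp
  · intro r _
    refine ((((hasDerivAt_id r).mul ((hasDerivAt_sin_pi r).mul (hasDerivAt_cos_pi r))).const_mul
      π).sub (((hasDerivAt_sin_pi r).pow 2).div_const 2)).congr_deriv ?_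
    simp
    ring
  · apply Continuous.intervalIntegrable; fun_prop

lemma integral_strip_cross :
    ∫ r in (0 : ℝ)..1,
      (π * cos (π * r) * deriv bumpProfile r - π ^ 2 * (sin (π * r) * bumpProfile r)) = 0 := by
  have c1 := contDiff_bumpProfile.continuous
  have c2 := contDiff_bumpProfile.continuous_deriv le_rfl
  rw [intervalIntegral.integral_eq_sub_of_hasDerivAt
    (f := fun r => π * (cos (π * r) * bumpProfile r))]
  · simp [bumpProfile_zero (r := 0) (by norm_num), bumpProfile_zero (r := 1) (by norm_num)]
  · intro r _
    refine (((hasDerivAt_cos_pi r).mul (hasDerivAt_bump r)).const_mul π).congr_deriv ?_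
    ring
  · apply Continuous.intervalIntegrable; fun_prop

/-- First-order effect of the bump on the disc. It is nonzero because
`-(r f′)′ - π² r f = -f′` for `f = sin (π r)`. -/
lemma integral_disc_cross :
    ∫ r in (0 : ℝ)..1,
      r * (π * cos (π * r) * deriv bumpProfile r - π ^ 2 * (sin (π * r) * bumpProfile r)) =
      -(π * ∫ r in (0 : ℝ)..1, cos (π * r) * bumpProfile r) := by
  have c1 := contDiff_bumpProfile.continuous
  have c2 := contDiff_bumpProfile.continuous_deriv le_rfl
  rw [eq_neg_iff_add_eq_zero, ← intervalIntegral.integral_const_mul, ← intervalIntegral.integral_add,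
    intervalIntegral.integral_eq_sub_of_hasDerivAt
    (f := fun r => r * (π * (cos (π * r) * bumpProfile r)))]
  · simp [bumpProfile_zero (r := 1) (by norm_num)]
  · intro r _
    refine ((hasDerivAt_id r).mul
      (((hasDerivAt_cos_pi r).mul (hasDerivAt_bump r)).const_mul π)).congr_deriv ?_
    simp
    ring
  all_goals apply Continuous.intervalIntegrable; fun_prop

lemma integral_sin_sq_pi : ∫ r in (0 : ℝ)..1, sin (π * r) ^ 2 = 1 / 2 := by
  rw [intervalIntegral.integral_eq_sub_of_hasDerivAt
    (f := fun r => r / 2 - sin (π * r) * cos (π * r) / (2 * π))]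
  · simp
  · intro r _
    refine (((hasDerivAt_id r).div_const 2).sub
      (((hasDerivAt_sin_pi r).mul (hasDerivAt_cos_pi r)).div_const (2 * π))).congr_deriv ?_
    have := sin_sq_add_cos_sq (π * r)
    field_simp
    linear_combination -this
  · apply Continuous.intervalIntegrable; fun_prop

/-- Energy of the bump on the disc, up to the angular factor. -/
def diagDisc : ℝ := ∫ r in (0 : ℝ)..1, r * (deriv bumpProfile r ^ 2 - π ^ 2 * bumpProfile r ^ 2)

/-- Energy of the bump times the short cutoff on one strip. -/
def diagStrip : ℝ := ∫ r in (0 : ℝ)..1,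
  ((deriv bumpProfile r ^ 2 - π ^ 2 * bumpProfile r ^ 2) * (∫ t in (0 : ℝ)..1, cutoff t ^ 2) +
    bumpProfile r ^ 2 * (∫ t in (0 : ℝ)..1, deriv cutoff t ^ 2))

/-! ### Choice of parameters -/

/-- Density in `r` of the total energy of the trial function with first profile having value `s` and
slope `d` at `r`, and second profile `ε` times the bump. The numbers `p`, `q`, `κ` stand for `∫ P²`,
`∫ P η` and `∫ P′²`. -/
def energyIntegrand (ε p q κ r s d : ℝ) : ℝ :=
  π / 2 * (r * ((d + ε * deriv bumpProfile r) ^ 2 - π ^ 2 * (s + ε * bumpProfile r) ^ 2)) +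
  2 * ((d ^ 2 - π ^ 2 * s ^ 2) * p +
    2 * (d * (ε * deriv bumpProfile r) - π ^ 2 * (s * (ε * bumpProfile r))) * q +
    ((ε * deriv bumpProfile r) ^ 2 - π ^ 2 * (ε * bumpProfile r) ^ 2) *
      (∫ t in (0 : ℝ)..1, cutoff t ^ 2) +
    s ^ 2 * κ + (ε * bumpProfile r) ^ 2 * (∫ t in (0 : ℝ)..1, deriv cutoff t ^ 2))

lemma continuous_energyIntegrand (ε p q κ : ℝ) :
    Continuous fun z : ℝ × ℝ × ℝ => energyIntegrand ε p q κ z.1 z.2.1 z.2.2 := by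
  have c1 := contDiff_bumpProfile.continuous
  have c2 := contDiff_bumpProfile.continuous_deriv le_rfl
  unfold energyIntegrand
  fun_prop

lemma IsProfile.mono {f : ℝ → ℝ} {c c' : ℝ} (hf : IsProfile f c) (h0 : 0 < c') (h : c' ≤ c) :
    IsProfile f c' where
  smooth := hf.smooth
  pos := h0
  zero_left := fun r hr => hf.zero_left r (by linarith)
  zero_right := fun r hr => hf.zero_right r (by linarith)

lemma energy_trial {f : ℝ → ℝ} {c ε L : ℝ} (hf : IsProfile f c) (hc : c ≤ 1 / 8) (hL : 1 < L) :
    (∫ x in GamSharp, ‖fderiv ℝ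
        (trial f (longCutoff L) (fun r => ε * bumpProfile r) cutoff) x‖ ^ 2) -
      π ^ 2 * ∫ x in GamSharp,
        (trial f (longCutoff L) (fun r => ε * bumpProfile r) cutoff x) ^ 2 =
    ∫ r in (0 : ℝ)..1, energyIntegrand ε (∫ t in (0 : ℝ)..(2 * L), longCutoff L t ^ 2)
      (∫ t in (0 : ℝ)..(2 * L), longCutoff L t * cutoff t)
      ((∫ t in (-1 : ℝ)..1, deriv cutoff t ^ 2) / L) r (f r) (deriv f r) := by
  have hk₁ := isCutoff_longCutoff (L := L) (by linarith)
  have hk₂ := isCutoff_cutoff (R := 2 * L) (by linarith)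
  have hη := isCutoff_cutoff (R := 1) le_rfl
  have hf₂ := isProfile_bump ε hf.pos hc
  rw [energy_formula hf hk₁ hf₂ hk₂ (by linarith)]
  have hd : ∀ r, deriv (fun r => ε * bumpProfile r) r = ε * deriv bumpProfile r := fun r =>
    ((hasDerivAt_bump r).const_mul ε).deriv
  have hp11 : ∫ t in (0 : ℝ)..(2 * L), cutoff t ^ 2 = ∫ t in (0 : ℝ)..1, cutoff t ^ 2 :=
    integral_eq_of_one_le (fun t ht => by rw [hη.zero t ht.le]; norm_num) (by linarith)
  have hq11 : ∫ t in (0 : ℝ)..(2 * L), deriv cutoff t ^ 2 = ∫ t in (0 : ℝ)..1, deriv cutoff t ^ 2 :=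
    integral_eq_of_one_le (fun t ht => by rw [hη.deriv_eq_zero ht]; norm_num) (by linarith)
  simp only [integral_strip_inner hk₁ hk₂ (deriv_mul_deriv_cutoff hL), hd, discDensity, hp11, hq11,
    integral_deriv_longCutoff_sq (L := L) (by linarith)]
  have c1 := contDiff_bumpProfile.continuous
  have c2 := contDiff_bumpProfile.continuous_deriv le_rfl
  have d1 := hf.smooth.continuous
  have d2 := hf.smooth.continuous_deriv le_rfl
  rw [← intervalIntegral.integral_const_mul, ← intervalIntegral.integral_const_mul,
    ← intervalIntegral.integral_add]
  · rfl
  all_goals apply Continuous.intervalIntegrable; fun_prop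

/-- The energy for the exact sine profile. Its zeroth-order part is only the cost `κ` of the long
cutoff. -/
lemma integral_limit (ε p q κ : ℝ) :
    ∫ r in (0 : ℝ)..1, energyIntegrand ε p q κ r (sin (π * r)) (π * cos (π * r)) =
      -(ε * (π ^ 2 * ∫ r in (0 : ℝ)..1, cos (π * r) * bumpProfile r)) +
        ε ^ 2 * (π / 2 * diagDisc + 2 * diagStrip) + κ := by
  have c1 := contDiff_bumpProfile.continuous
  have c2 := contDiff_bumpProfile.continuous_deriv le_rfl
  have hsplit : ∫ r in (0 : ℝ)..1, energyIntegrand ε p q κ r (sin (π * r)) (π * cos (π * r)) =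
      π / 2 * (∫ r in (0 : ℝ)..1, r * ((π * cos (π * r)) ^ 2 - π ^ 2 * sin (π * r) ^ 2)) +
      π * ε * (∫ r in (0 : ℝ)..1,
        r * (π * cos (π * r) * deriv bumpProfile r - π ^ 2 * (sin (π * r) * bumpProfile r))) +
      ε ^ 2 * (π / 2) * diagDisc +
      2 * p * (∫ r in (0 : ℝ)..1, ((π * cos (π * r)) ^ 2 - π ^ 2 * sin (π * r) ^ 2)) +
      4 * ε * q * (∫ r in (0 : ℝ)..1,
        (π * cos (π * r) * deriv bumpProfile r - π ^ 2 * (sin (π * r) * bumpProfile r))) +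
      2 * ε ^ 2 * diagStrip + 2 * κ * (∫ r in (0 : ℝ)..1, sin (π * r) ^ 2) := by
    unfold diagDisc diagStrip energyIntegrand
    generalize (∫ t in (0 : ℝ)..1, cutoff t ^ 2) = m
    generalize (∫ t in (0 : ℝ)..1, deriv cutoff t ^ 2) = m'
    simp only [← intervalIntegral.integral_const_mul]
    rw [← intervalIntegral.integral_add, ← intervalIntegral.integral_add,
      ← intervalIntegral.integral_add, ← intervalIntegral.integral_add,
      ← intervalIntegral.integral_add, ← intervalIntegral.integral_add]
    · congr 1
      ext r
      ring
    all_goals apply Continuous.intervalIntegrable; fun_prop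
  rw [hsplit, integral_disc_zero, integral_disc_cross, integral_strip_zero, integral_strip_cross,
    integral_sin_sq_pi]
  ring

lemma exists_parameters : ∃ ε L : ℝ, 1 < L ∧
    -(ε * (π ^ 2 * ∫ r in (0 : ℝ)..1, cos (π * r) * bumpProfile r)) +
      ε ^ 2 * (π / 2 * diagDisc + 2 * diagStrip) +
      (∫ t in (-1 : ℝ)..1, deriv cutoff t ^ 2) / L < 0 := by
  set a := π ^ 2 * ∫ r in (0 : ℝ)..1, cos (π * r) * bumpProfile r with ha
  have ha0 : 0 < a := mul_pos (by positivity) integral_cos_bump_pos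
  set b := π / 2 * diagDisc + 2 * diagStrip
  set K := ∫ t in (-1 : ℝ)..1, deriv cutoff t ^ 2
  -- `ε` makes the quadratic term at most half of the linear one; `L` then makes `K / L` smaller still
  set ε := a / (2 * (|b| + 1)) with hε
  have hb : 0 < |b| + 1 := by positivity
  have hε0 : 0 < ε := by positivity
  have h1 : ε * b ≤ a / 2 := by
    have : ε * b ≤ ε * (|b| + 1) := by
      gcongr
      linarith [le_abs_self b]
    refine this.trans (le_of_eq ?_)
    rw [hε]; field_simp
  refine ⟨ε, 2 * |K| / (ε * a) + 2, ?_, ?_⟩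
  · have : 0 ≤ 2 * |K| / (ε * a) := by positivity
    linarith
  · have hL : 0 < 2 * |K| / (ε * a) + 2 := by positivity
    have h2 : K / (2 * |K| / (ε * a) + 2) < ε * a / 2 := by
      rw [div_lt_iff₀ hL]
      have : ε * a / 2 * (2 * |K| / (ε * a) + 2) = |K| + ε * a := by field_simp
      rw [this]
      have := mul_pos hε0 ha0
      linarith [le_abs_self K]
    nlinarith

lemma exists_trial : ∃ ψ : E2 → ℝ, ContDiff ℝ 1 ψ ∧ HasCompactSupport ψ ∧ tsupport ψ ⊆ GamSharp ∧
    (∫ x in GamSharp, ‖fderiv ℝ ψ x‖ ^ 2) < π ^ 2 * ∫ x in GamSharp, (ψ x) ^ 2 := by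
  obtain ⟨ε, L, hL, hneg⟩ := exists_parameters
  have ht := tendsto_integral_sinApprox (continuous_energyIntegrand ε
    (∫ t in (0 : ℝ)..(2 * L), longCutoff L t ^ 2)
    (∫ t in (0 : ℝ)..(2 * L), longCutoff L t * cutoff t)
    ((∫ t in (-1 : ℝ)..1, deriv cutoff t ^ 2) / L))
  rw [integral_limit] at ht
  obtain ⟨n, hn⟩ := (ht.eventually_lt_const hneg).exists
  have hf := (isProfile_sinApprox n).mono (c' := min (1 / (n + 1)) (1 / 8))
    (lt_min (by positivity) (by norm_num)) (min_le_left _ _)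
  have hc : min (1 / ((n : ℝ) + 1)) (1 / 8) ≤ 1 / 8 := min_le_right _ _
  rw [← energy_trial hf hc hL, sub_neg] at hn
  have hk₁ := isCutoff_longCutoff (L := L) (by linarith)
  have hk₂ := isCutoff_cutoff (R := 2 * L) (by linarith)
  have hf₂ := isProfile_bump ε hf.pos hc
  exact ⟨_, contDiff_trial hf hk₁ hf₂ hk₂, hasCompactSupport_trial hf hk₁ hf₂ hk₂,
    tsupport_trial_subset hf hk₁ hf₂ hk₂, hn⟩

/-- Theorem 5.1 ii, existence part: the Dirichlet Laplacian on the
rounded broken guide `Γ♯` has a bound state below `π²`: there exists a nonzero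
`ψ ∈ H¹₀(Γ♯)` with `∫ |∇ψ|² < π² ∫ |ψ|²`; consequently `λ₁(Γ♯) < π²`. -/
theorem bound_state_GamSharp :
    (∃ ψ : EuclideanSpace ℝ (Fin 2) → ℝ, ContDiff ℝ 1 ψ ∧ HasCompactSupport ψ ∧
      tsupport ψ ⊆ GamSharp ∧ (∫ x in GamSharp, (ψ x) ^ 2) ≠ 0 ∧
      (∫ x in GamSharp, ‖fderiv ℝ ψ x‖ ^ 2) < π ^ 2 * ∫ x in GamSharp, (ψ x) ^ 2) ∧
    lamGamSharp < π ^ 2 := by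
  obtain ⟨ψ, h1, h2, h3, h4⟩ := exists_trial
  have hg : 0 ≤ ∫ x in GamSharp, ‖fderiv ℝ ψ x‖ ^ 2 := integral_nonneg fun x => by positivity
  have hpos : 0 < ∫ x in GamSharp, (ψ x) ^ 2 := by
    by_contra! h
    nlinarith [sq_nonneg π]
  refine ⟨⟨ψ, h1, h2, h3, hpos.ne', h4⟩, ?_⟩
  refine lt_of_le_of_lt (csInf_le ⟨0, ?_⟩ ⟨ψ, h1, h2, h3, hpos.ne', rfl⟩) ((div_lt_iff₀ hpos).2 h4)
  rintro r ⟨u, -, -, -, -, rfl⟩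
  exact div_nonneg (integral_nonneg fun x => by positivity) (integral_nonneg fun x => by positivity)
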